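/- Every alternating 3-form γ on ℝ⁷ admits a unique decomposition γ = r·φ + v⌟ψ + i_φ(h), where r ∈ ℝ, v ∈ ℝ⁷, and h is a symmetric bilinear form on ℝ⁷ with trace Σ_{i=1}^{7} h(e_i,e_i) = 0. (This is the G₂-type decomposition Λ³ = Λ³₁ ⊕ Λ³₇ ⊕ Λ³₂₇.) -/

import Mathlib

open scoped BigOperators Matrix

noncomputable section

namespace G2

/-- The standard basis vector `e i` of `ℝ⁷`. -/
def e (i : Fin 7) : Fin 7 → ℝ := fun j => if j = i then 1 else 0

/-- The 3-form `e^a ∧ e^b ∧ e^c` (determinant convention), evaluated on `(x, y, z)`. -/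
def w3 (a b c : Fin 7) (x y z : Fin 7 → ℝ) : ℝ :=
  x a * (y b * z c - y c * z b) - x b * (y a * z c - y c * z a)
    + x c * (y a * z b - y b * z a)

/-- The 4-form `e^a ∧ e^b ∧ e^c ∧ e^d`, evaluated on `(x, y, z, w)`. -/
def w4 (a b c d : Fin 7) (x y z w : Fin 7 → ℝ) : ℝ :=
  Matrix.det !![x a, x b, x c, x d; y a, y b, y c, y d;
                z a, z b, z c, z d; w a, w b, w c, w d]

/-- The fundamental `G₂` 3-form
`φ = e^{123}+e^{145}+e^{167}+e^{246}-e^{257}-e^{347}-e^{356}` (indices shifted to start at 0),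
as a trilinear alternating function of three vectors. -/
def phi (x y z : Fin 7 → ℝ) : ℝ :=
  w3 0 1 2 x y z + w3 0 3 4 x y z + w3 0 5 6 x y z + w3 1 3 5 x y z
    - w3 1 4 6 x y z - w3 2 3 6 x y z - w3 2 4 5 x y z

/-- The 4-form `ψ = *φ = e^{4567}+e^{2367}+e^{2345}+e^{1357}-e^{1346}-e^{1256}-e^{1247}`
(indices shifted to start at 0), as a function of four vectors. -/
def psi (x y z w : Fin 7 → ℝ) : ℝ :=
  w4 3 4 5 6 x y z w + w4 1 2 5 6 x y z w + w4 1 2 3 4 x y z w + w4 0 2 4 6 x y z w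
    - w4 0 2 3 5 x y z w - w4 0 1 4 5 x y z w - w4 0 1 3 6 x y z w

/-- `ε_{ijk} = φ(e_i, e_j, e_k)`. -/
def eps (i j k : Fin 7) : ℝ := phi (e i) (e j) (e k)

/-- `ε_{ijkl} = ψ(e_i, e_j, e_k, e_l)`. -/
def eps4 (i j k l : Fin 7) : ℝ := psi (e i) (e j) (e k) (e l)

/-- The volume form `e^1 ∧ ⋯ ∧ e^7`, evaluated on a 7-tuple of vectors. -/
def vol (v : Fin 7 → (Fin 7 → ℝ)) : ℝ := Matrix.det (Matrix.of fun i j => v i j)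

/-- The matrix `[v]` with `[v]_{ij} = Σ_k ε_{ijk} v_k`. -/
def bracket (v : Fin 7 → ℝ) : Matrix (Fin 7) (Fin 7) ℝ :=
  Matrix.of fun i j => ∑ k : Fin 7, eps i j k * v k

/-- The vector `⟨A⟩` with `⟨A⟩_i = Σ_{j,k} ε_{ijk} A_{jk}`. -/
def angle (A : Matrix (Fin 7) (Fin 7) ℝ) : Fin 7 → ℝ :=
  fun i => ∑ j : Fin 7, ∑ k : Fin 7, eps i j k * A j k

/-- Wedge product of two 2-forms (determinant convention), evaluated on four vectors. -/
def wedge22 (A B : (Fin 7 → ℝ) → (Fin 7 → ℝ) → ℝ) (v : Fin 4 → (Fin 7 → ℝ)) : ℝ :=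
  (1 / 4 : ℝ) * ∑ σ : Equiv.Perm (Fin 4),
    ((Equiv.Perm.sign σ : ℤ) : ℝ) * (A (v (σ 0)) (v (σ 1)) * B (v (σ 2)) (v (σ 3)))

/-- Wedge product of three 2-forms (determinant convention), evaluated on six vectors. -/
def wedge222 (A B C : (Fin 7 → ℝ) → (Fin 7 → ℝ) → ℝ) (v : Fin 6 → (Fin 7 → ℝ)) : ℝ :=
  (1 / 8 : ℝ) * ∑ σ : Equiv.Perm (Fin 6),
    ((Equiv.Perm.sign σ : ℤ) : ℝ) *
      (A (v (σ 0)) (v (σ 1)) * B (v (σ 2)) (v (σ 3)) * C (v (σ 4)) (v (σ 5)))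

/-- Wedge product of two 2-forms and a 3-form (determinant convention),
evaluated on seven vectors. -/
def wedge223 (A B : (Fin 7 → ℝ) → (Fin 7 → ℝ) → ℝ)
    (C : (Fin 7 → ℝ) → (Fin 7 → ℝ) → (Fin 7 → ℝ) → ℝ)
    (v : Fin 7 → (Fin 7 → ℝ)) : ℝ :=
  (1 / 24 : ℝ) * ∑ σ : Equiv.Perm (Fin 7),
    ((Equiv.Perm.sign σ : ℤ) : ℝ) *
      (A (v (σ 0)) (v (σ 1)) * B (v (σ 2)) (v (σ 3)) * C (v (σ 4)) (v (σ 5)) (v (σ 6)))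

/-- The map `i_φ : S²(ℝ⁷)* → Λ³(ℝ⁷)*`,
`i_φ(h) = Σ_{i,j,k,l} ε_{ikl} h_{ij} e^j ∧ e^k ∧ e^l`, evaluated on `(x, y, z)`. -/
def iphi (h : Fin 7 → Fin 7 → ℝ) (x y z : Fin 7 → ℝ) : ℝ :=
  ∑ i : Fin 7, ∑ j : Fin 7, ∑ k : Fin 7, ∑ l : Fin 7, eps i k l * h i j * w3 j k l x y z

/-! Contracting a 3-form with `φ`, by `γ ↦ (Σ_{b,c} γ_{ibc} ε_{jbc})_{ij}`, sends `φ` to `6·1`,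
`v⌟ψ` to `4[v]` and `i_φ(h)` to `8h + 4 (tr h)·1` for symmetric `h`. When `tr h = 0` these are a
scalar, a skew and a traceless symmetric matrix, hence independent, and `⟨[v]⟩ = 6v` recovers `v`.
So `(r, v, h) ↦ (r·φ + v⌟ψ + i_φ(h), tr h)`, with `h` running over all symmetric forms, is injective
between spaces of dimension `1 + 7 + 28 = 35 + 1`, and therefore bijective.

The three contractions follow from the identity
`(x × y)·(z × w) = (x·z)(y·w) - (x·w)(y·z) + ψ(x, y, z, w)` for the cross product of `ℝ⁷`, and
from `i_φ(h)` being twice the image of `φ` under `h` acting as a derivation. -/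

lemma alternatingMap_sum_apply {R M N ι κ : Type*} [Semiring R] [AddCommMonoid M] [Module R M]
    [AddCommMonoid N] [Module R N] (s : Finset κ) (f : κ → M [⋀^ι]→ₗ[R] N) (v : ι → M) :
    (∑ i ∈ s, f i) v = ∑ i ∈ s, f i v :=
  map_sum (⟨⟨fun g => g v, rfl⟩, fun _ _ => rfl⟩ : M [⋀^ι]→ₗ[R] N →+ N) f s

section Dimensions

variable (R : Type*) [CommRing R]

lemma finite_alternatingMap (M : Type*) [AddCommGroup M] [Module R M] [Module.Free R M]
    [Module.Finite R M] (n : ℕ) : Module.Finite R (M [⋀^Fin n]→ₗ[R] R) :=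
  Module.Finite.equiv exteriorPower.alternatingMapLinearEquiv.symm

lemma finrank_alternatingMap [Nontrivial R] (M : Type*) [AddCommGroup M] [Module R M]
    [Module.Free R M] [Module.Finite R M] (n : ℕ) :
    Module.finrank R (M [⋀^Fin n]→ₗ[R] R) = (Module.finrank R M).choose n := by
  rw [exteriorPower.alternatingMapLinearEquiv.finrank_eq, Module.finrank_linearMap_self,
    exteriorPower.finrank_eq]

/-- The `R`-module of symmetric matrices, that is, of symmetric bilinear forms on `ι → R`. -/
def symmetricMatrices (ι : Type*) : Submodule R (Matrix ι ι R) where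
  carrier := {A | A.IsSymm}
  add_mem' hA hB := hA.add hB
  zero_mem' := Matrix.isSymm_zero
  smul_mem' c _ hA := hA.smul c

/-- Symmetric matrices as functions on unordered pairs of indices, which makes their dimension a
count of `Sym2 ι`. -/
def symmetricMatricesEquiv (ι : Type*) : symmetricMatrices R ι ≃ₗ[R] (Sym2 ι → R) where
  toFun A := Sym2.lift ⟨A.1, fun i j => A.2.apply j i⟩
  map_add' A B := by ext ⟨i, j⟩; rfl
  map_smul' c A := by ext ⟨i, j⟩; rfl
  invFun f := ⟨Matrix.of fun i j => f s(i, j), Matrix.IsSymm.ext fun i j => by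
    simp only [Matrix.of_apply, Sym2.eq_swap]⟩
  left_inv A := rfl
  right_inv f := by ext ⟨i, j⟩; rfl

lemma finite_symmetricMatrices (ι : Type*) [Finite ι] : Module.Finite R (symmetricMatrices R ι) :=
  Module.Finite.equiv (symmetricMatricesEquiv R ι).symm

lemma finrank_symmetricMatrices [Nontrivial R] (ι : Type*) [Fintype ι] :
    Module.finrank R (symmetricMatrices R ι) = (Fintype.card ι + 1).choose 2 := by
  classical
  rw [(symmetricMatricesEquiv R ι).finrank_eq, Module.finrank_fintype_fun_eq_card, Sym2.card]

end Dimensions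

lemma eq_zero_of_scalar_add_skew_add_traceless_eq_zero {K n : Type*} [Field K] [CharZero K]
    [Fintype n] [DecidableEq n] [Nonempty n] {a : K} {A S : Matrix n n K} (hA : Aᵀ = -A)
    (hS : S.IsSymm) (htr : S.trace = 0) (hsum : a • 1 + A + S = 0) : a = 0 ∧ A = 0 ∧ S = 0 := by
  have hsumT : a • 1 - A + S = 0 := by
    simpa [hA, hS.eq, sub_eq_add_neg] using congrArg Matrix.transpose hsum
  have hskew : A = 0 := by
    have hdiff : (2 : K) • A = (a • 1 + A + S) - (a • 1 - A + S) := by module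
    rw [hsum, hsumT, sub_zero] at hdiff
    exact (smul_eq_zero_iff_right two_ne_zero).1 hdiff
  have hsymm : a • 1 + S = 0 := by rwa [hskew, add_zero] at hsum
  have ha : a = 0 := by simpa [htr] using congrArg Matrix.trace hsymm
  exact ⟨ha, hskew, by rwa [ha, zero_smul, zero_add] at hsymm⟩

lemma e_eq_single (i : Fin 7) : e i = Pi.single i 1 := by
  ext j
  simp only [e, Pi.single_apply]

lemma e_dotProduct (i : Fin 7) (x : Fin 7 → ℝ) : e i ⬝ᵥ x = x i := by
  rw [e_eq_single, single_one_dotProduct]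

lemma dotProduct_e (x : Fin 7 → ℝ) (i : Fin 7) : x ⬝ᵥ e i = x i := by
  rw [dotProduct_comm, e_dotProduct]

lemma phi_swap_left (x y z : Fin 7 → ℝ) : phi y x z = -phi x y z := by
  simp only [phi, w3]
  ring

lemma phi_swap_right (x y z : Fin 7 → ℝ) : phi x z y = -phi x y z := by
  simp only [phi, w3]
  ring

lemma phi_rotate (x y z : Fin 7 → ℝ) : phi y z x = phi x y z := by
  rw [phi_swap_right y x z, phi_swap_left x y z, neg_neg]

lemma w4_eq (a b c d : Fin 7) (x y z w : Fin 7 → ℝ) :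
    w4 a b c d x y z w =
      x a * w3 b c d y z w - x b * w3 a c d y z w + x c * w3 a b d y z w
        - x d * w3 a b c y z w := by
  simp only [w4, w3, Matrix.det_succ_row_zero (n := 3), Matrix.det_fin_three, Fin.sum_univ_four,
    Fin.isValue, Fin.coe_ofNat_eq_mod, Matrix.of_apply, Matrix.cons_val', Matrix.cons_val_fin_one,
    Matrix.submatrix_apply, Fin.succ_zero_eq_one, Fin.succ_one_eq_two, Fin.reduceSucc,
    Matrix.cons_val, Matrix.cons_val_zero, Matrix.cons_val_one, Fin.succAbove, Fin.castSucc_zero,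
    Fin.castSucc_one, Fin.reduceCastSucc, Fin.reduceLT, Fin.lt_one_iff, Fin.reduceEq,
    not_lt_zero, zero_lt_one, lt_self_iff_false, ↓reduceIte]
  ring

lemma psi_swap_second_fourth (x y z w : Fin 7 → ℝ) : psi x w z y = -psi x y z w := by
  simp only [psi, w4_eq, w3]
  ring

/-- The coordinate form `e^{s 0} ∧ ⋯ ∧ e^{s (n-1)}`, in the determinant convention. -/
def coordForm {R ι : Type*} [CommRing R] {n : ℕ} (s : Fin n → ι) : (ι → R) [⋀^Fin n]→ₗ[R] R :=
  (Matrix.detRowAlternating (n := Fin n) (R := R)).compLinearMap (LinearMap.funLeft R R s)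

lemma coordForm_three (a b c : Fin 7) (x y z : Fin 7 → ℝ) :
    coordForm ![a, b, c] ![x, y, z] = w3 a b c x y z := by
  change Matrix.det (Matrix.of fun i => LinearMap.funLeft ℝ ℝ ![a, b, c] (![x, y, z] i)) = _
  simp only [w3, Matrix.det_fin_three, Matrix.of_apply, LinearMap.funLeft_apply, Matrix.cons_val]
  ring

lemma coordForm_four (a b c d : Fin 7) (x y z w : Fin 7 → ℝ) :
    coordForm ![a, b, c, d] ![x, y, z, w] = w4 a b c d x y z w := by
  change Matrix.det (Matrix.of fun i => LinearMap.funLeft ℝ ℝ ![a, b, c, d] (![x, y, z, w] i)) = _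
  rw [w4]
  congr 1
  ext i j
  fin_cases i <;> fin_cases j <;> rfl

/-- `φ` as an alternating map. -/
def phiForm : (Fin 7 → ℝ) [⋀^Fin 3]→ₗ[ℝ] ℝ :=
  coordForm ![0, 1, 2] + coordForm ![0, 3, 4] + coordForm ![0, 5, 6] + coordForm ![1, 3, 5]
    - coordForm ![1, 4, 6] - coordForm ![2, 3, 6] - coordForm ![2, 4, 5]

/-- `ψ` as an alternating map. -/
def psiForm : (Fin 7 → ℝ) [⋀^Fin 4]→ₗ[ℝ] ℝ :=
  coordForm ![3, 4, 5, 6] + coordForm ![1, 2, 5, 6] + coordForm ![1, 2, 3, 4]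
    + coordForm ![0, 2, 4, 6] - coordForm ![0, 2, 3, 5] - coordForm ![0, 1, 4, 5]
    - coordForm ![0, 1, 3, 6]

/-- `i_φ` as a linear map into alternating maps. -/
def iphiForm : Matrix (Fin 7) (Fin 7) ℝ →ₗ[ℝ] (Fin 7 → ℝ) [⋀^Fin 3]→ₗ[ℝ] ℝ :=
  ∑ i, ∑ j, ∑ k, ∑ l, (Matrix.entryLinearMap ℝ ℝ i j).smulRight (eps i k l • coordForm ![j, k, l])

lemma phiForm_apply (x y z : Fin 7 → ℝ) : phiForm ![x, y, z] = phi x y z := by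
  simp only [phiForm, phi, AlternatingMap.add_apply, AlternatingMap.sub_apply, coordForm_three]

lemma psiForm_apply (x y z w : Fin 7 → ℝ) : psiForm ![x, y, z, w] = psi x y z w := by
  simp only [psiForm, psi, AlternatingMap.add_apply, AlternatingMap.sub_apply, coordForm_four]

lemma iphiForm_apply (h : Matrix (Fin 7) (Fin 7) ℝ) (x y z : Fin 7 → ℝ) :
    iphiForm h ![x, y, z] = iphi h x y z := by
  simp only [iphiForm, iphi, LinearMap.sum_apply, alternatingMap_sum_apply,
    LinearMap.smulRight_apply, AlternatingMap.smul_apply, coordForm_three,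
    Matrix.entryLinearMap_apply, smul_eq_mul]
  exact Finset.sum_congr rfl fun i _ => Finset.sum_congr rfl fun j _ =>
    Finset.sum_congr rfl fun k _ => Finset.sum_congr rfl fun l _ => by ring

/-- The 3-form `r·φ + v⌟ψ + i_φ(h)`. -/
def g2Form (r : ℝ) (v : Fin 7 → ℝ) (h : Matrix (Fin 7) (Fin 7) ℝ) :
    (Fin 7 → ℝ) [⋀^Fin 3]→ₗ[ℝ] ℝ :=
  r • phiForm + psiForm.curryLeft v + iphiForm h

lemma g2Form_apply (r : ℝ) (v : Fin 7 → ℝ) (h : Matrix (Fin 7) (Fin 7) ℝ) (x y z : Fin 7 → ℝ) :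
    g2Form r v h ![x, y, z] = r * phi x y z + psi v x y z + iphi h x y z := by
  have hpsi : psiForm.curryLeft v ![x, y, z] = psi v x y z := psiForm_apply v x y z
  rw [g2Form, AlternatingMap.add_apply, AlternatingMap.add_apply, AlternatingMap.smul_apply,
    smul_eq_mul, hpsi, phiForm_apply, iphiForm_apply]

lemma eq_g2Form_iff {γ : (Fin 7 → ℝ) [⋀^Fin 3]→ₗ[ℝ] ℝ} {r : ℝ} {v : Fin 7 → ℝ}
    {h : Matrix (Fin 7) (Fin 7) ℝ} :
    γ = g2Form r v h ↔
      ∀ x y z, γ ![x, y, z] = r * phi x y z + psi v x y z + iphi h x y z := by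
  refine ⟨fun hγ x y z => by rw [hγ, g2Form_apply], fun hγ => ?_⟩
  ext w
  have hw : ![w 0, w 1, w 2] = w := FinVec.etaExpand_eq w
  rw [← hw, hγ, g2Form_apply]

/-- The cross product of `ℝ⁷` determined by `⟨x × y, z⟩ = φ(x, y, z)`. -/
def cross (x y : Fin 7 → ℝ) : Fin 7 → ℝ := fun k => phi x y (e k)

lemma cross_dotProduct (x y z : Fin 7 → ℝ) : cross x y ⬝ᵥ z = phi x y z := by
  simp only [dotProduct, cross, phi, w3, Fin.isValue, e, mul_ite, mul_one, mul_zero,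
    Fin.sum_univ_seven, Fin.reduceEq, ↓reduceIte, one_ne_zero, zero_ne_one]
  ring

lemma cross_dotProduct_cross (x y z w : Fin 7 → ℝ) :
    cross x y ⬝ᵥ cross z w = (x ⬝ᵥ z) * (y ⬝ᵥ w) - (x ⬝ᵥ w) * (y ⬝ᵥ z) + psi x y z w := by
  simp only [dotProduct, cross, phi, psi, w4_eq, w3, Fin.isValue, e, mul_ite, mul_one, mul_zero,
    Fin.sum_univ_seven, Fin.reduceEq, ↓reduceIte, one_ne_zero, zero_ne_one, sub_zero, zero_sub,
    add_zero, zero_add, sub_self]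
  ring

lemma phi_eq_sum_left (x y z : Fin 7 → ℝ) : phi x y z = ∑ i, x i * phi (e i) y z := by
  simp only [← phi_rotate _ y z, ← cross_dotProduct y z, dotProduct_e]
  exact dotProduct_comm _ _

lemma phi_eq_sum_right (x y z : Fin 7 → ℝ) :
    phi x y z = ∑ k, ∑ l, phi x (e k) (e l) * (y k * z l) := by
  calc phi x y z = ∑ k, y k * phi (e k) z x := by rw [← phi_rotate, phi_eq_sum_left]
    _ = ∑ k, y k * ∑ l, phi x (e k) (e l) * z l := by
        refine Finset.sum_congr rfl fun k _ => ?_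
        rw [phi_rotate x, ← cross_dotProduct]
        rfl
    _ = ∑ k, ∑ l, phi x (e k) (e l) * (y k * z l) := by
        simp only [Finset.mul_sum]
        exact Finset.sum_congr rfl fun k _ => Finset.sum_congr rfl fun l _ => by ring

lemma sum_phi_mul_phi (x y : Fin 7 → ℝ) :
    ∑ b, ∑ c, phi x (e b) (e c) * phi y (e b) (e c) = 6 * (x ⬝ᵥ y) := by
  have psi_eq_zero (b : Fin 7) : psi x (e b) y (e b) = 0 := by
    linarith [psi_swap_second_fourth x (e b) y (e b)]
  calc ∑ b, ∑ c, phi x (e b) (e c) * phi y (e b) (e c)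
      = ∑ b, cross x (e b) ⬝ᵥ cross y (e b) := rfl
    _ = ∑ b, (x ⬝ᵥ y - x b * y b) := by
        simp [cross_dotProduct_cross, psi_eq_zero, dotProduct_e, e_dotProduct, e]
    _ = 6 * (x ⬝ᵥ y) := by
        rw [Finset.sum_sub_distrib, Finset.sum_const, ← dotProduct, Finset.card_univ,
          Fintype.card_fin, nsmul_eq_mul]
        push_cast
        ring

lemma sum_psi_mul_phi (v x y : Fin 7 → ℝ) :
    ∑ b, ∑ c, psi v x (e b) (e c) * phi y (e b) (e c) = 4 * phi v x y := by
  have psi_eq (b c : Fin 7) : psi v x (e b) (e c) =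
      phi (cross v x) (e b) (e c) - v b * x c + x b * v c := by
    have h := cross_dotProduct_cross v x (e b) (e c)
    rw [dotProduct_comm, cross_dotProduct, phi_rotate] at h
    simp only [dotProduct_e] at h
    linarith
  calc ∑ b, ∑ c, psi v x (e b) (e c) * phi y (e b) (e c)
      = (∑ b, ∑ c, phi (cross v x) (e b) (e c) * phi y (e b) (e c))
        - (∑ b, ∑ c, phi y (e b) (e c) * (v b * x c))
        + ∑ b, ∑ c, phi y (e b) (e c) * (x b * v c) := by
        simp only [psi_eq, ← Finset.sum_sub_distrib, ← Finset.sum_add_distrib]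
        exact Finset.sum_congr rfl fun b _ => Finset.sum_congr rfl fun c _ => by ring
    _ = 6 * phi v x y - phi y v x + phi y x v := by
        rw [sum_phi_mul_phi, cross_dotProduct, ← phi_eq_sum_right, ← phi_eq_sum_right]
    _ = 4 * phi v x y := by
        rw [phi_swap_right y v x, ← phi_rotate y v x]
        ring

lemma sum_eps_mul_w3 (i j : Fin 7) (x y z : Fin 7 → ℝ) :
    ∑ k, ∑ l, eps i k l * w3 j k l x y z =
      2 * (x j * phi (e i) y z + y j * phi (e i) z x + z j * phi (e i) x y) := by
  have expand (u w : Fin 7 → ℝ) : phi (e i) u w = ∑ k, ∑ l, eps i k l * (u k * w l) :=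
    phi_eq_sum_right (e i) u w
  calc ∑ k, ∑ l, eps i k l * w3 j k l x y z
      = x j * phi (e i) y z - x j * phi (e i) z y + (y j * phi (e i) z x - y j * phi (e i) x z)
        + (z j * phi (e i) x y - z j * phi (e i) y x) := by
        simp only [expand, Finset.mul_sum, ← Finset.sum_sub_distrib, ← Finset.sum_add_distrib]
        refine Finset.sum_congr rfl fun k _ => Finset.sum_congr rfl fun l _ => ?_
        rw [w3]
        ring
    _ = 2 * (x j * phi (e i) y z + y j * phi (e i) z x + z j * phi (e i) x y) := by
        rw [phi_swap_right (e i) y z, phi_swap_right (e i) z x, phi_swap_right (e i) x y]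
        ring

lemma phi_mulVec_left (h : Matrix (Fin 7) (Fin 7) ℝ) (x y z : Fin 7 → ℝ) :
    phi (h *ᵥ x) y z = ∑ i, ∑ j, h i j * (x j * phi (e i) y z) := by
  rw [phi_eq_sum_left]
  simp only [Matrix.mulVec, dotProduct, Finset.sum_mul, mul_assoc]

lemma iphi_eq (h : Matrix (Fin 7) (Fin 7) ℝ) (x y z : Fin 7 → ℝ) :
    iphi h x y z = 2 * (phi (h *ᵥ x) y z + phi x (h *ᵥ y) z + phi x y (h *ᵥ z)) := by
  calc iphi h x y z = ∑ i, ∑ j, h i j * ∑ k, ∑ l, eps i k l * w3 j k l x y z := by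
        simp only [iphi, Finset.mul_sum, mul_comm (eps _ _ _) (h _ _), mul_assoc]
    _ = 2 * (phi (h *ᵥ x) y z + phi (h *ᵥ y) z x + phi (h *ᵥ z) x y) := by
        simp only [sum_eps_mul_w3, phi_mulVec_left, Finset.mul_sum, ← Finset.sum_add_distrib]
        exact Finset.sum_congr rfl fun i _ => Finset.sum_congr rfl fun j _ => by ring
    _ = 2 * (phi (h *ᵥ x) y z + phi x (h *ᵥ y) z + phi x y (h *ᵥ z)) := by
        rw [← phi_rotate (h *ᵥ z) x y, phi_rotate x (h *ᵥ y) z]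

lemma psi_eq_sum_second (x y z w : Fin 7 → ℝ) : psi x y z w = ∑ i, y i * psi x (e i) z w := by
  simp only [psi, w4_eq, w3, Fin.isValue, e, ite_mul, one_mul, zero_mul, Fin.sum_univ_seven,
    Fin.reduceEq, ↓reduceIte, one_ne_zero, zero_ne_one]
  ring

lemma sum_psi_mulVec_eq_zero {h : Matrix (Fin 7) (Fin 7) ℝ} (hh : h.IsSymm) (x y : Fin 7 → ℝ) :
    ∑ b, psi x (h *ᵥ e b) y (e b) = 0 := by
  have expand : ∑ b, psi x (h *ᵥ e b) y (e b) = ∑ b, ∑ i, h i b * psi x (e i) y (e b) := by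
    simp only [psi_eq_sum_second x (h *ᵥ _), Matrix.mulVec, dotProduct_e]
  have antisymm : ∑ b, ∑ i, h i b * psi x (e i) y (e b) =
      -∑ b, ∑ i, h i b * psi x (e i) y (e b) := by
    conv_lhs => rw [Finset.sum_comm]
    simp only [← Finset.sum_neg_distrib, ← mul_neg, ← psi_swap_second_fourth, hh.apply]
  linarith

lemma sum_phi_mulVec_mul_phi {h : Matrix (Fin 7) (Fin 7) ℝ} (hh : h.IsSymm) (x y : Fin 7 → ℝ) :
    ∑ b, ∑ c, phi x (h *ᵥ e b) (e c) * phi y (e b) (e c) = h.trace * (x ⬝ᵥ y) - h *ᵥ x ⬝ᵥ y := by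
  have hx (b : Fin 7) : h *ᵥ e b ⬝ᵥ y = (h *ᵥ y) b := by
    rw [dotProduct_comm, Matrix.dotProduct_mulVec, ← Matrix.mulVec_transpose, hh.eq, dotProduct_e]
  calc ∑ b, ∑ c, phi x (h *ᵥ e b) (e c) * phi y (e b) (e c)
      = ∑ b, cross x (h *ᵥ e b) ⬝ᵥ cross y (e b) := rfl
    _ = ∑ b, (x ⬝ᵥ y * h b b - x b * (h *ᵥ y) b) := by
        simp only [cross_dotProduct_cross, Finset.sum_add_distrib, sum_psi_mulVec_eq_zero hh]
        simp [dotProduct_e, hx, Matrix.mulVec]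
    _ = h.trace * (x ⬝ᵥ y) - h *ᵥ x ⬝ᵥ y := by
        rw [Finset.sum_sub_distrib, ← Finset.mul_sum, mul_comm, ← dotProduct,
          Matrix.dotProduct_mulVec, ← Matrix.mulVec_transpose, hh.eq]
        rfl

lemma sum_iphi_mul_phi {h : Matrix (Fin 7) (Fin 7) ℝ} (hh : h.IsSymm) (x y : Fin 7 → ℝ) :
    ∑ b, ∑ c, iphi h x (e b) (e c) * phi y (e b) (e c) =
      8 * (h *ᵥ x ⬝ᵥ y) + 4 * (h.trace * (x ⬝ᵥ y)) := by
  have swap : ∑ b, ∑ c, phi x (e b) (h *ᵥ e c) * phi y (e b) (e c) =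
      ∑ b, ∑ c, phi x (h *ᵥ e b) (e c) * phi y (e b) (e c) := by
    rw [Finset.sum_comm]
    refine Finset.sum_congr rfl fun b _ => Finset.sum_congr rfl fun c _ => ?_
    rw [phi_swap_right x, phi_swap_right y, neg_mul_neg]
  calc ∑ b, ∑ c, iphi h x (e b) (e c) * phi y (e b) (e c)
      = 2 * (∑ b, ∑ c, phi (h *ᵥ x) (e b) (e c) * phi y (e b) (e c)
        + ∑ b, ∑ c, phi x (h *ᵥ e b) (e c) * phi y (e b) (e c)
        + ∑ b, ∑ c, phi x (e b) (h *ᵥ e c) * phi y (e b) (e c)) := by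
        simp only [iphi_eq, Finset.mul_sum, ← Finset.sum_add_distrib]
        exact Finset.sum_congr rfl fun b _ => Finset.sum_congr rfl fun c _ => by ring
    _ = 8 * (h *ᵥ x ⬝ᵥ y) + 4 * (h.trace * (x ⬝ᵥ y)) := by
        rw [swap, sum_phi_mul_phi, sum_phi_mulVec_mul_phi hh]
        ring

/-- The contraction `γ ↦ (Σ_{b,c} γ_{ibc} ε_{jbc})_{ij}` of a 3-form with `φ`. -/
def contraction (γ : (Fin 7 → ℝ) [⋀^Fin 3]→ₗ[ℝ] ℝ) : Matrix (Fin 7) (Fin 7) ℝ :=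
  Matrix.of fun i j => ∑ b, ∑ c, γ ![e i, e b, e c] * eps j b c

lemma contraction_zero : contraction 0 = 0 := by
  ext i j
  simp only [contraction, Matrix.of_apply, AlternatingMap.zero_apply, zero_mul,
    Finset.sum_const_zero, Matrix.zero_apply]

lemma bracket_apply (v : Fin 7 → ℝ) (i j : Fin 7) : bracket v i j = phi (e i) (e j) v :=
  cross_dotProduct _ _ _

lemma bracket_transpose (v : Fin 7 → ℝ) : (bracket v)ᵀ = -bracket v := by
  ext i j
  rw [Matrix.transpose_apply, Matrix.neg_apply, bracket_apply, bracket_apply, phi_swap_left]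

lemma angle_bracket (v : Fin 7 → ℝ) : angle (bracket v) = (6 : ℝ) • v := by
  ext i
  calc angle (bracket v) i = ∑ j, ∑ k, phi (e i) (e j) (e k) * phi v (e j) (e k) := by
        simp only [angle, eps, bracket_apply, phi_rotate v]
    _ = 6 * v i := by rw [sum_phi_mul_phi, e_dotProduct]

lemma contraction_g2Form (r : ℝ) (v : Fin 7 → ℝ) {h : Matrix (Fin 7) (Fin 7) ℝ} (hh : h.IsSymm) :
    contraction (g2Form r v h) =
      (6 * r + 4 * h.trace) • 1 + (4 : ℝ) • bracket v + (8 : ℝ) • h := by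
  ext i j
  have dot : e i ⬝ᵥ e j = (1 : Matrix (Fin 7) (Fin 7) ℝ) i j := by
    rw [e_dotProduct, e, Matrix.one_apply]
  have entry : h *ᵥ e i ⬝ᵥ e j = h i j := by
    rw [dotProduct_e, Matrix.mulVec, dotProduct_e, hh.apply]
  calc contraction (g2Form r v h) i j
      = r * (∑ b, ∑ c, phi (e i) (e b) (e c) * phi (e j) (e b) (e c))
        + (∑ b, ∑ c, psi v (e i) (e b) (e c) * phi (e j) (e b) (e c))
        + ∑ b, ∑ c, iphi h (e i) (e b) (e c) * phi (e j) (e b) (e c) := by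
        simp only [contraction, Matrix.of_apply, g2Form_apply, eps, add_mul,
          Finset.sum_add_distrib, Finset.mul_sum, mul_assoc]
    _ = r * (6 * (e i ⬝ᵥ e j)) + 4 * bracket v i j
        + (8 * (h *ᵥ e i ⬝ᵥ e j) + 4 * (h.trace * (e i ⬝ᵥ e j))) := by
        rw [sum_phi_mul_phi, sum_psi_mul_phi, sum_iphi_mul_phi hh, bracket_apply, phi_rotate v]
    _ = ((6 * r + 4 * h.trace) • 1 + (4 : ℝ) • bracket v + (8 : ℝ) • h) i j := by
        rw [dot, entry]
        simp only [Matrix.add_apply, Matrix.smul_apply, smul_eq_mul]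
        ring

lemma eq_zero_of_bracket_eq_zero {v : Fin 7 → ℝ} (hv : bracket v = 0) : v = 0 := by
  have hangle : (6 : ℝ) • v = 0 := by
    rw [← angle_bracket, hv]
    ext i
    simp only [angle, Matrix.zero_apply, mul_zero, Finset.sum_const_zero, Pi.zero_apply]
  exact (smul_eq_zero_iff_right (by norm_num)).1 hangle

/-- The map `(r, v, h) ↦ (r·φ + v⌟ψ + i_φ(h), tr h)` on symmetric `h`. Recording the trace,
instead of restricting to trace zero, makes both sides `36`-dimensional. -/
def decompositionMap : ℝ × (Fin 7 → ℝ) × symmetricMatrices ℝ (Fin 7) →ₗ[ℝ]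
    ((Fin 7 → ℝ) [⋀^Fin 3]→ₗ[ℝ] ℝ) × ℝ where
  toFun p := (g2Form p.1 p.2.1 p.2.2, Matrix.trace p.2.2.1)
  map_add' p q := by
    ext : 1
    · simp only [g2Form, Prod.fst_add, Prod.snd_add, Submodule.coe_add, map_add, add_smul]
      abel
    · exact Matrix.trace_add p.2.2.1 q.2.2.1
  map_smul' c p := by
    ext : 1
    · simp only [g2Form, Prod.smul_fst, Prod.smul_snd, Submodule.coe_smul, map_smul, smul_assoc,
        smul_add, RingHom.id_apply]
    · exact Matrix.trace_smul c p.2.2.1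

lemma decompositionMap_injective : Function.Injective decompositionMap := by
  refine (injective_iff_map_eq_zero _).2 ?_
  rintro ⟨r, v, h, hh⟩ hmap
  obtain ⟨hform, htr⟩ : g2Form r v h = 0 ∧ h.trace = 0 := Prod.mk.inj hmap
  have hsum : (6 * r) • 1 + (4 : ℝ) • bracket v + (8 : ℝ) • h = 0 := by
    have hcontraction := contraction_g2Form r v hh
    rwa [hform, contraction_zero, htr, mul_zero, add_zero, eq_comm] at hcontraction
  obtain ⟨hr, hv, hsmul⟩ := eq_zero_of_scalar_add_skew_add_traceless_eq_zero
    (by rw [Matrix.transpose_smul, bracket_transpose, smul_neg]) (hh.smul 8)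
    (by rw [Matrix.trace_smul, htr, smul_zero]) hsum
  obtain rfl : r = 0 := (mul_eq_zero_iff_left (by norm_num)).1 hr
  obtain rfl : v = 0 :=
    eq_zero_of_bracket_eq_zero ((smul_eq_zero_iff_right (by norm_num)).1 hv)
  obtain rfl : h = 0 := (smul_eq_zero_iff_right (by norm_num)).1 hsmul
  rfl

lemma decompositionMap_bijective : Function.Bijective decompositionMap := by
  have := finite_alternatingMap ℝ (Fin 7 → ℝ) 3
  have := finite_symmetricMatrices ℝ (Fin 7)
  have hdim : Module.finrank ℝ (ℝ × (Fin 7 → ℝ) × symmetricMatrices ℝ (Fin 7)) =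
      Module.finrank ℝ (((Fin 7 → ℝ) [⋀^Fin 3]→ₗ[ℝ] ℝ) × ℝ) := by
    simp only [Module.finrank_prod, Module.finrank_self, Module.finrank_fin_fun,
      finrank_symmetricMatrices, finrank_alternatingMap, Fintype.card_fin]
    rfl
  exact ⟨decompositionMap_injective,
    (LinearMap.injective_iff_surjective_of_finrank_eq_finrank hdim).1 decompositionMap_injective⟩

/-- every alternating 3-form `γ` on `ℝ⁷` decomposes uniquely as
`γ = r·φ + v⌟ψ + i_φ(h)` with `r ∈ ℝ`, `v ∈ ℝ⁷`, and `h` a symmetric bilinear form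
(given by its matrix of coefficients `h_{ij} = h(e_i,e_j)`) of trace zero. -/
theorem threeForm_decomposition (γ : AlternatingMap ℝ (Fin 7 → ℝ) ℝ (Fin 3)) :
    ∃! p : ℝ × (Fin 7 → ℝ) × (Fin 7 → Fin 7 → ℝ),
      (∀ i j : Fin 7, p.2.2 i j = p.2.2 j i) ∧
      (∑ i : Fin 7, p.2.2 i i = 0) ∧
      (∀ x y z : Fin 7 → ℝ,
        γ ![x, y, z] = p.1 * phi x y z + psi p.2.1 x y z + iphi p.2.2 x y z) := by
  obtain ⟨⟨r, v, h, hh⟩, hmap, huniq⟩ := decompositionMap_bijective.existsUnique (γ, 0)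
  obtain ⟨hform, htr⟩ : g2Form r v h = γ ∧ h.trace = 0 := Prod.mk.inj hmap
  refine ⟨(r, v, h), ⟨fun i j => hh.apply j i, htr, eq_g2Form_iff.1 hform.symm⟩, ?_⟩
  rintro ⟨r', v', h'⟩ ⟨hh', htr', hγ⟩
  have heq := huniq ⟨r', v', Matrix.of h', Matrix.IsSymm.ext fun i j => hh' j i⟩
    (Prod.ext (eq_g2Form_iff.2 hγ).symm htr')
  exact congrArg (fun p => (p.1, p.2.1, p.2.2.1)) heq

end G2

end
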